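/- Let n ≥ 2 and let S ⊆ ℝⁿ be a convex surface. Then S is a convex quadric if and only if there exists an affine isometry f : ℝⁿ → ℝⁿ such that f(S) is one of the following sets, with all scalars a_i involved positive: (1) {x : a₁x₁² + ⋯ + a_k x_k² = 1} for some 1 ≤ k ≤ n; (2) {x : a₁x₁² − a₂x₂² − ⋯ − a_k x_k² = 1 and x₁ ≥ 0} for some 2 ≤ k ≤ n; (3) {x : x₁ = 0}; (4) {x : a₁x₁² − a₂x₂² − ⋯ − a_k x_k² = 0 and x₁ ≥ 0} for some 2 ≤ k ≤ n; (5) {x : a₁x₁² + ⋯ + a_{k−1} x_{k−1}² = x_k} for some 2 ≤ k ≤ n. -/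

import Mathlib

open Set Metric RealInnerProductSpace

noncomputable section

/-- Euclidean n-space. -/
abbrev En (n : ℕ) := EuclideanSpace ℝ (Fin n)

/-- A quadric surface in ℝⁿ: the zero set of a quadratic polynomial whose quadratic
part (given by a symmetric matrix) is not identically zero. -/
def IsQuadricSurface {n : ℕ} (Q : Set (En n)) : Prop :=
  ∃ (a : Matrix (Fin n) (Fin n) ℝ) (b : Fin n → ℝ) (c : ℝ),
    a.IsSymm ∧ a ≠ 0 ∧
    Q = {x : En n | (∑ i, ∑ k, a i k * x i * x k) + 2 * (∑ i, b i * x i) + c = 0}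

/-- A real quadric surface: a nonempty quadric surface. -/
def IsRealQuadricSurface {n : ℕ} (Q : Set (En n)) : Prop :=
  IsQuadricSurface Q ∧ Q.Nonempty

/-- The set of connected components of a subset `F` of a topological space. -/
def componentsIn {α : Type*} [TopologicalSpace α] (F : Set α) : Set (Set α) :=
  {C | ∃ x ∈ F, C = connectedComponentIn F x}

/-- A convex quadric: the frontier of a convex connected component of the complement
of a real quadric surface. -/
def IsConvexQuadric {n : ℕ} (S : Set (En n)) : Prop :=
  ∃ Q U : Set (En n), IsRealQuadricSurface Q ∧ U ∈ componentsIn Qᶜ ∧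
    Convex ℝ U ∧ S = frontier U

/-- A convex surface in ℝⁿ: the frontier of a convex set with nonempty interior that is
distinct from ℝⁿ. -/
def IsConvexSurface {n : ℕ} (S : Set (En n)) : Prop :=
  ∃ K : Set (En n), Convex ℝ K ∧ (interior K).Nonempty ∧ K ≠ Set.univ ∧ S = frontier K

/-!
After an affine isometry, a quadratic function `p` is either `∑ i, l i * x i ^ 2 + c` or
`∑ i, l i * x i ^ 2 - m * x k` with `0 < m` and `l k = 0`, and after a change of sign the convex
component `U` of `{p ≠ 0}` is a component of `{p < 0}`.

* If all `l i` are nonnegative, then `p` is convex, so `U = {p < 0}` and its frontier is `{p = 0}`: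
  an elliptic cylinder, an elliptic paraboloid or a hyperplane.
* If `l k < 0`, write `p = r - |l k| * x k ^ 2`, where `r` does not depend on `x k`. If `r z < 0`,
  then the line through `z` parallel to the `k`-th axis lies in `U`. For every `y`, the points
  `y ± t e_k` are joined to this line within `{p < 0}` as soon as `t` is large, so convexity of `U`
  gives `y ∈ U`, contradicting `{p = 0} ≠ ∅`. Hence `0 ≤ r`. This excludes the term `- m * x k`;
  in the other case the convex function `√r - √|l k| * x k` (after `x ↦ -x` if necessary) cuts
  out `U`, whose frontier is a sheet of a hyperboloid, a nappe of a cone or a hyperplane.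

Conversely, each canonical form is `{g = 0}` for such a convex function `g`, and a component of the
complement of the quadric is `{g < 0}`.
-/

section Components

variable {α β : Type*} [TopologicalSpace α] [TopologicalSpace β] {F G U V : Set α}

theorem subset_of_mem_componentsIn (hU : U ∈ componentsIn F) : U ⊆ F := by
  obtain ⟨x, -, rfl⟩ := hU
  exact connectedComponentIn_subset F x

theorem nonempty_of_mem_componentsIn (hU : U ∈ componentsIn F) : U.Nonempty := by
  obtain ⟨x, hx, rfl⟩ := hU
  exact ⟨x, mem_connectedComponentIn hx⟩

theorem isPreconnected_of_mem_componentsIn (hU : U ∈ componentsIn F) : IsPreconnected U := by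
  obtain ⟨x, -, rfl⟩ := hU
  exact isPreconnected_connectedComponentIn

theorem subset_component_of_isPreconnected (hU : U ∈ componentsIn F) (hV : IsPreconnected V)
    (hVF : V ⊆ F) (hUV : (U ∩ V).Nonempty) : V ⊆ U := by
  obtain ⟨x, -, rfl⟩ := hU
  obtain ⟨y, hyU, hyV⟩ := hUV
  rw [connectedComponentIn_eq hyU]
  exact hV.subset_connectedComponentIn hyV hVF

theorem mem_componentsIn_of_subset (hU : U ∈ componentsIn G) (hUF : U ⊆ F) (hFG : F ⊆ G) :
    U ∈ componentsIn F := by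
  obtain ⟨x, hx⟩ := nonempty_of_mem_componentsIn hU
  refine ⟨x, hUF hx, subset_antisymm ?_ ?_⟩
  · exact (isPreconnected_of_mem_componentsIn hU).subset_connectedComponentIn hx hUF
  · exact subset_component_of_isPreconnected hU isPreconnected_connectedComponentIn
      ((connectedComponentIn_subset F x).trans hFG) ⟨x, hx, mem_connectedComponentIn (hUF hx)⟩

theorem mem_componentsIn_of_isOpen (hU : IsOpen U) (hUc : IsConnected U) (hUF : U ⊆ F)
    (hfr : frontier U ⊆ Fᶜ) : U ∈ componentsIn F := by
  obtain ⟨x, hx⟩ := hUc.nonempty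
  refine ⟨x, hUF hx, subset_antisymm
    (hUc.isPreconnected.subset_connectedComponentIn hx hUF) ?_⟩
  refine isPreconnected_connectedComponentIn.subset_of_closure_inter_subset hU
    ⟨x, mem_connectedComponentIn (hUF hx), hx⟩ ?_
  rintro y ⟨hy, hyC⟩
  by_contra hyU
  exact hfr (hU.frontier_eq ▸ ⟨hy, hyU⟩) (connectedComponentIn_subset F x hyC)

theorem preimage_mem_componentsIn (f : β ≃ₜ α) (hU : U ∈ componentsIn F) :
    f ⁻¹' U ∈ componentsIn (f ⁻¹' F) := by
  obtain ⟨x, hx, rfl⟩ := hU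
  refine ⟨f.symm x, by simpa using hx, ?_⟩
  rw [← f.image_symm, f.symm.image_connectedComponentIn hx]

theorem neg_or_pos_of_isPreconnected {p : α → ℝ} (hp : Continuous p) (hU : IsPreconnected U)
    (hne : ∀ x ∈ U, p x ≠ 0) : (∀ x ∈ U, p x < 0) ∨ ∀ x ∈ U, 0 < p x :=
  hU.subset_or_subset (isOpen_lt hp continuous_const) (isOpen_lt continuous_const hp)
    (disjoint_left.2 fun _ (hx : p _ < 0) => hx.not_gt) fun x hx => lt_or_gt_of_ne (hne x hx)

theorem mem_componentsIn_neg_or_pos {p : α → ℝ} (hp : Continuous p)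
    (hU : U ∈ componentsIn {x | p x = 0}ᶜ) :
    U ∈ componentsIn {x | p x < 0} ∨ U ∈ componentsIn {x | 0 < p x} :=
  (neg_or_pos_of_isPreconnected hp (isPreconnected_of_mem_componentsIn hU)
    fun _ hx => subset_of_mem_componentsIn hU hx).imp
    (fun h => mem_componentsIn_of_subset hU h fun _ hx => ne_of_lt hx)
    fun h => mem_componentsIn_of_subset hU h fun _ hx => ne_of_gt hx

end Components

section ConvexSublevel

variable {E : Type*} [AddCommGroup E] [Module ℝ E] {g : E → ℝ}

theorem convex_setOf_neg (hg : ConvexOn ℝ univ g) : Convex ℝ {x | g x < 0} := by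
  simpa using hg.convex_lt 0

variable [TopologicalSpace E] [IsTopologicalAddGroup E] [ContinuousSMul ℝ E]

theorem frontier_setOf_neg_eq (hg : ConvexOn ℝ univ g) (hgc : Continuous g)
    (hneg : ∃ y, g y < 0) : frontier {x | g x < 0} = {x | g x = 0} := by
  refine subset_antisymm (frontier_lt_subset_eq hgc continuous_const) fun x (hx : g x = 0) => ?_
  obtain ⟨y, hy⟩ := hneg
  rw [(isOpen_lt hgc continuous_const).frontier_eq]
  refine ⟨?_, by simp [hx]⟩
  refine closure_mono ?_ (segment_subset_closure_openSegment (left_mem_segment ℝ x y))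
  rintro _ ⟨s, t, hs, ht, hst, rfl⟩
  calc g (s • x + t • y) ≤ s • g x + t • g y := hg.2 trivial trivial hs.le ht.le hst
    _ = t * g y := by simp [hx]
    _ < 0 := mul_neg_of_pos_of_neg ht hy

theorem frontier_component_eq {F U : Set E} (hg : ConvexOn ℝ univ g) (hgc : Continuous g)
    (hU : U ∈ componentsIn F) (hUg : ∀ x ∈ U, g x < 0) (hgF : ∀ x, g x < 0 → x ∈ F) :
    frontier U = {x | g x = 0} := by
  obtain ⟨y, hy⟩ := nonempty_of_mem_componentsIn hU
  have hUeq : U = {x | g x < 0} := subset_antisymm hUg <|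
    subset_component_of_isPreconnected hU (convex_setOf_neg hg).isPreconnected hgF ⟨y, hy, hUg y hy⟩
  rw [hUeq, frontier_setOf_neg_eq hg hgc ⟨y, hUg y hy⟩]

end ConvexSublevel

section NegativeDirection

variable {E : Type*} [AddCommGroup E] [Module ℝ E] [TopologicalSpace E] [IsTopologicalAddGroup E]
  [ContinuousSMul ℝ E] {r : E → ℝ} {φ : E →L[ℝ] ℝ} {v : E} {a : ℝ} {U : Set E}

theorem isCompact_segment (x y : E) : IsCompact (segment ℝ x y) := by
  rw [segment_eq_image]
  exact isCompact_Icc.image (by fun_prop)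

theorem exists_translate_segment_subset (hr : Continuous r) (hrv : ∀ x (t : ℝ), r (t • v + x) = r x)
    (hφ : φ v = 1) (ha : 0 < a) (x y : E) :
    ∃ M : ℝ, 0 ≤ M ∧ ∀ t : ℝ, M ≤ |t| →
      segment ℝ (t • v + x) (t • v + y) ⊆ {z | r z < a * φ z ^ 2} := by
  obtain ⟨C, hC⟩ := (isCompact_segment x y).exists_bound_of_continuousOn hr.continuousOn
  obtain ⟨D, hD⟩ := (isCompact_segment x y).exists_bound_of_continuousOn φ.continuous.continuousOn
  have hC0 : 0 ≤ C := (norm_nonneg _).trans (hC x (left_mem_segment ℝ x y))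
  have hD0 : 0 ≤ D := (norm_nonneg _).trans (hD x (left_mem_segment ℝ x y))
  refine ⟨D + (C / a + 1), by positivity, fun t ht => ?_⟩
  rw [← segment_translate_image]
  rintro _ ⟨w, hw, rfl⟩
  have hfar : C / a + 1 ≤ |t + φ w| := by
    have hφw : |φ w| ≤ D := hD w hw
    linarith [add_sub_cancel_right t (φ w) ▸ abs_sub (t + φ w) (φ w)]
  have hsq : C / a < (t + φ w) ^ 2 := by
    rw [← sq_abs]
    nlinarith [div_nonneg hC0 ha.le]
  calc r (t • v + w) = r w := hrv w t
    _ ≤ C := (le_abs_self _).trans (hC w hw)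
    _ < (t + φ w) ^ 2 * a := (div_lt_iff₀ ha).1 hsq
    _ = a * φ (t • v + w) ^ 2 := by rw [map_add, map_smul, hφ, smul_eq_mul, mul_one, mul_comm]

theorem exists_translate_mem_component (hrv : ∀ x (t : ℝ), r (t • v + x) = r x)
    (hφ : φ v = 1) (ha : 0 < a) (hU : U ∈ componentsIn {x | r x < a * φ x ^ 2}) {x : E}
    (hx : x ∈ U) {M : ℝ} (hM : 0 ≤ M) : ∃ t : ℝ, |t| = M ∧ t • v + x ∈ U := by
  obtain ⟨t, htM, ht⟩ : ∃ t : ℝ, |t| = M ∧ 0 ≤ t * φ x := by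
    rcases le_total 0 (φ x) with h | h
    · exact ⟨M, abs_of_nonneg hM, mul_nonneg hM h⟩
    · exact ⟨-M, by rw [abs_neg, abs_of_nonneg hM], mul_nonneg_of_nonpos_of_nonpos (by simpa) h⟩
  refine ⟨t, htM, subset_component_of_isPreconnected hU
    (convex_segment x (t • v + x)).isPreconnected ?_ ⟨x, hx, left_mem_segment ℝ _ _⟩
    (right_mem_segment ℝ _ _)⟩
  rw [segment_eq_image']
  rintro _ ⟨s, hs, rfl⟩
  have hz : x + s • (t • v + x - x) = (s * t) • v + x := by module
  have hgrow : φ x ^ 2 ≤ (s * t + φ x) ^ 2 := by nlinarith [mul_nonneg hs.1 ht, sq_nonneg (s * t)]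
  calc r (x + s • (t • v + x - x)) = r x := by rw [hz, hrv]
    _ < a * φ x ^ 2 := subset_of_mem_componentsIn hU hx
    _ ≤ a * (s * t + φ x) ^ 2 := by gcongr
    _ = a * φ (x + s • (t • v + x - x)) ^ 2 := by
      rw [hz, map_add, map_smul, hφ, smul_eq_mul, mul_one]

theorem line_subset_component (hr : Continuous r) (hrv : ∀ x (t : ℝ), r (t • v + x) = r x)
    (hφ : φ v = 1) (ha : 0 < a) (hU : U ∈ componentsIn {x | r x < a * φ x ^ 2}) {z : E}
    (hz : r z < 0) (t : ℝ) : t • v + z ∈ U := by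
  obtain ⟨x, hx⟩ := nonempty_of_mem_componentsIn hU
  obtain ⟨M, hM, hfar⟩ := exists_translate_segment_subset hr hrv hφ ha x z
  obtain ⟨s, hs, hsx⟩ := exists_translate_mem_component hrv hφ ha hU hx hM
  have hsz : s • v + z ∈ U :=
    subset_component_of_isPreconnected hU (convex_segment _ _).isPreconnected (hfar s hs.ge)
      ⟨_, hsx, left_mem_segment ℝ _ _⟩ (right_mem_segment ℝ _ _)
  have hline : IsPreconnected (range fun t : ℝ => t • v + z) :=
    isPreconnected_range (by fun_prop)
  refine subset_component_of_isPreconnected hU hline ?_ ⟨_, hsz, s, rfl⟩ ⟨t, rfl⟩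
  rintro _ ⟨t, rfl⟩
  calc r (t • v + z) = r z := hrv z t
    _ < 0 := hz
    _ ≤ a * φ (t • v + z) ^ 2 := by positivity

-- A point `z` with `r z < 0` puts the line `z + ℝ v` into `U`. Far out on this line every other
-- point `y ± t v` is visible inside the set, so it belongs to `U`, and then so does `y`.
theorem nonneg_of_convex_component (hr : Continuous r) (hrv : ∀ x (t : ℝ), r (t • v + x) = r x)
    (hφ : φ v = 1) (ha : 0 < a) (hU : U ∈ componentsIn {x | r x < a * φ x ^ 2})
    (hUc : Convex ℝ U) (hne : ∃ y, a * φ y ^ 2 ≤ r y) (z : E) : 0 ≤ r z := by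
  by_contra! hz
  obtain ⟨y, hy⟩ := hne
  obtain ⟨M, -, hfar⟩ := exists_translate_segment_subset hr hrv hφ ha z y
  have hmem (t : ℝ) (ht : M ≤ |t|) : t • v + y ∈ U :=
    subset_component_of_isPreconnected hU (convex_segment _ _).isPreconnected (hfar t ht)
      ⟨_, line_subset_component hr hrv hφ ha hU hz t, left_mem_segment ℝ _ _⟩
      (right_mem_segment ℝ _ _)
  have hmid : midpoint ℝ (M • v + y) (-M • v + y) = y := by
    rw [midpoint_eq_smul_add, invOf_eq_inv]
    module
  have hyU : y ∈ U := hmid ▸ hUc.midpoint_mem (hmem M (le_abs_self M))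
    (hmem (-M) ((le_abs_self M).trans_eq (abs_neg M).symm))
  exact hy.not_gt (subset_of_mem_componentsIn hU hyU)

end NegativeDirection

section SqrtSub

variable {a s y : ℝ}

theorem sqrt_sub_sqrt_mul_neg_iff (ha : 0 < a) :
    √s - √a * y < 0 ↔ s < a * y ^ 2 ∧ 0 < y := by
  have hsq : (√a * y) ^ 2 = a * y ^ 2 := by rw [mul_pow, Real.sq_sqrt ha.le]
  have hpos : 0 < √a * y ↔ 0 < y := mul_pos_iff_of_pos_left (Real.sqrt_pos.2 ha)
  rw [sub_neg, ← hsq, ← hpos]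
  exact ⟨fun h => ⟨(Real.sqrt_lt' ((Real.sqrt_nonneg s).trans_lt h)).1 h,
    (Real.sqrt_nonneg s).trans_lt h⟩, fun h => (Real.sqrt_lt' h.2).2 h.1⟩

theorem sqrt_sub_sqrt_mul_eq_zero_iff (hs : 0 ≤ s) (ha : 0 < a) :
    √s - √a * y = 0 ↔ s = a * y ^ 2 ∧ 0 ≤ y := by
  have hsq : (√a * y) ^ 2 = a * y ^ 2 := by rw [mul_pow, Real.sq_sqrt ha.le]
  have hnonneg : 0 ≤ √a * y ↔ 0 ≤ y := mul_nonneg_iff_of_pos_left (Real.sqrt_pos.2 ha)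
  rw [sub_eq_zero, ← hsq, ← hnonneg]
  constructor
  · exact fun h => ⟨by rw [← h, Real.sq_sqrt hs], h ▸ Real.sqrt_nonneg s⟩
  · rintro ⟨rfl, h⟩
    exact Real.sqrt_sq h

end SqrtSub

section DiagForm

/-- The diagonal quadratic form `∑ i ∈ P, a i * x i ^ 2` on Euclidean space. Restricting the
sum to `P` makes it possible to keep all its coefficients positive. -/
def diagForm {ι : Type*} (P : Finset ι) (a : ι → ℝ) (x : EuclideanSpace ℝ ι) : ℝ :=
  ∑ i ∈ P, a i * x i ^ 2

variable {ι : Type*} {P : Finset ι} {a : ι → ℝ} {k : ι} {c : ℝ}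

theorem diagForm_nonneg (ha : ∀ i ∈ P, 0 ≤ a i) (x : EuclideanSpace ℝ ι) :
    0 ≤ diagForm P a x :=
  Finset.sum_nonneg fun i hi => mul_nonneg (ha i hi) (sq_nonneg _)

theorem diagForm_filter_pos (ha : ∀ i ∈ P, 0 ≤ a i) (x : EuclideanSpace ℝ ι) :
    diagForm {i ∈ P | 0 < a i} a x = diagForm P a x := by
  refine Finset.sum_filter_of_ne fun i hi hne => (ha i hi).lt_of_ne ?_
  exact (left_ne_zero_of_mul hne).symm

theorem diagForm_div (P : Finset ι) (a : ι → ℝ) (c : ℝ) (x : EuclideanSpace ℝ ι) :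
    diagForm P (fun i => a i / c) x = diagForm P a x / c := by
  simp only [diagForm, Finset.sum_div, div_mul_eq_mul_div]

theorem diagForm_congr {b : ι → ℝ} {x y : EuclideanSpace ℝ ι}
    (h : ∀ i ∈ P, a i * x i ^ 2 = b i * y i ^ 2) : diagForm P a x = diagForm P b y :=
  Finset.sum_congr rfl h

theorem diagForm_insert_update [DecidableEq ι] (hk : k ∉ P) (a : ι → ℝ) (a₀ : ℝ)
    (x : EuclideanSpace ℝ ι) :
    diagForm (insert k P) (Function.update a k a₀) x = a₀ * x k ^ 2 + diagForm P a x := by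
  rw [diagForm, Finset.sum_insert hk, Function.update_self]
  congr 1
  refine diagForm_congr fun i hi => ?_
  rw [Function.update_of_ne (ne_of_mem_of_not_mem hi hk)]

theorem diagForm_single_of_mem [DecidableEq ι] (hk : k ∈ P) (a : ι → ℝ) (t : ℝ) :
    diagForm P a (EuclideanSpace.single k t) = a k * t ^ 2 := by
  rw [diagForm, Finset.sum_eq_single_of_mem k hk]
  · simp
  · intro i _ hik
    simp [hik]

theorem diagForm_single_of_notMem [DecidableEq ι] (hk : k ∉ P) (a : ι → ℝ) (t : ℝ) :
    diagForm P a (EuclideanSpace.single k t) = 0 := by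
  refine Finset.sum_eq_zero fun i hi => ?_
  simp [ne_of_mem_of_not_mem hi hk]

theorem diagForm_add_single [DecidableEq ι] (hk : k ∉ P) (a : ι → ℝ) (t : ℝ)
    (x : EuclideanSpace ℝ ι) :
    diagForm P a (EuclideanSpace.single k t + x) = diagForm P a x := by
  refine diagForm_congr fun i hi => ?_
  simp [ne_of_mem_of_not_mem hi hk]

theorem diagForm_univ_eq_erase_add [Fintype ι] [DecidableEq ι] (l : ι → ℝ) (k : ι)
    (x : EuclideanSpace ℝ ι) :
    diagForm Finset.univ l x = diagForm (Finset.univ.erase k) l x + l k * x k ^ 2 :=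
  (Finset.sum_erase_add _ _ (Finset.mem_univ k)).symm

theorem continuous_diagForm (P : Finset ι) (a : ι → ℝ) : Continuous (diagForm P a) := by
  unfold diagForm
  fun_prop

theorem concaveOn_mul_coord (b : ℝ) (k : ι) :
    ConcaveOn ℝ univ fun x : EuclideanSpace ℝ ι => b * x k :=
  (b • EuclideanSpace.projₗ (𝕜 := ℝ) k).concaveOn convex_univ

theorem exists_norm_sq_eq_diagForm (ha : ∀ i ∈ P, 0 ≤ a i) :
    ∃ D : EuclideanSpace ℝ ι →ₗ[ℝ] EuclideanSpace ℝ P, ∀ x, ‖D x‖ ^ 2 = diagForm P a x := by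
  refine ⟨(WithLp.linearEquiv 2 ℝ (P → ℝ)).symm.toLinearMap ∘ₗ
    LinearMap.pi fun i => √(a i) • EuclideanSpace.projₗ (i : ι), fun x => ?_⟩
  have hcoord (i : P) : (√(a i) * x i) ^ 2 = a i * x i ^ 2 := by
    rw [mul_pow, Real.sq_sqrt (ha i i.2)]
  rw [EuclideanSpace.real_norm_sq_eq]
  exact (Fintype.sum_congr _ _ hcoord).trans (P.sum_coe_sort fun i => a i * x i ^ 2)

theorem convexOn_sqrt_norm_sq_add_sq {E : Type*} [NormedAddCommGroup E] [NormedSpace ℝ E] (c : ℝ) :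
    ConvexOn ℝ univ fun v : E => √(‖v‖ ^ 2 + c ^ 2) := by
  have hnorm (v : E) : √(‖v‖ ^ 2 + c ^ 2) = ‖WithLp.toLp 2 (v, c)‖ := by
    simp [WithLp.prod_norm_eq_of_L2]
  simp only [hnorm]
  refine ⟨convex_univ, fun x _ y _ s t hs ht hst => ?_⟩
  have hcomb : WithLp.toLp 2 (s • x + t • y, c) =
      s • WithLp.toLp 2 (x, c) + t • WithLp.toLp 2 (y, c) := by
    rw [← WithLp.toLp_smul, ← WithLp.toLp_smul, ← WithLp.toLp_add, Prod.smul_mk, Prod.smul_mk,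
      Prod.mk_add_mk, ← add_smul, hst, one_smul]
  change ‖WithLp.toLp 2 (s • x + t • y, c)‖ ≤ _
  rw [hcomb]
  exact convexOn_univ_norm.2 trivial trivial hs ht hst

theorem convexOn_sqrt_diagForm_add (ha : ∀ i ∈ P, 0 ≤ a i) (hc : 0 ≤ c) :
    ConvexOn ℝ univ fun x => √(diagForm P a x + c) := by
  obtain ⟨D, hD⟩ := exists_norm_sq_eq_diagForm ha
  have := (convexOn_sqrt_norm_sq_add_sq (√c)).comp_linearMap D
  simpa only [preimage_univ, Function.comp_def, hD, Real.sq_sqrt hc] using this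

theorem convexOn_diagForm (ha : ∀ i ∈ P, 0 ≤ a i) : ConvexOn ℝ univ (diagForm P a) := by
  have := (convexOn_sqrt_diagForm_add ha le_rfl).pow (fun x _ => Real.sqrt_nonneg _) 2
  refine this.congr fun x _ => ?_
  simp [Real.sq_sqrt (diagForm_nonneg ha x)]

theorem convexOn_diagForm_sub_mul_coord (ha : ∀ i ∈ P, 0 ≤ a i) (b : ℝ) (k : ι) :
    ConvexOn ℝ univ fun x => diagForm P a x - b * x k :=
  (convexOn_diagForm ha).sub (concaveOn_mul_coord b k)

theorem convexOn_sqrt_diagForm_sub_mul_coord (ha : ∀ i ∈ P, 0 ≤ a i) (hc : 0 ≤ c) (b : ℝ) (k : ι) :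
    ConvexOn ℝ univ fun x => √(diagForm P a x + c) - b * x k :=
  (convexOn_sqrt_diagForm_add ha hc).sub (concaveOn_mul_coord b k)

end DiagForm

section QuadraticFunction

/-- A quadratic function on a real inner product space: a polynomial function of degree exactly
two, written with a symmetric operator `T` for its quadratic part and a vector `b` for its linear
part. Its zero sets in `En n` are the quadric surfaces. -/
def IsQuadraticFunction {E : Type*} [NormedAddCommGroup E] [InnerProductSpace ℝ E]
    (p : E → ℝ) : Prop :=
  ∃ (T : E →ₗ[ℝ] E) (b : E) (c : ℝ), T.IsSymmetric ∧ T ≠ 0 ∧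
    ∀ x, p x = ⟪x, T x⟫ + 2 * ⟪b, x⟫ + c

variable {E E' : Type*} [NormedAddCommGroup E] [InnerProductSpace ℝ E]
  [NormedAddCommGroup E'] [InnerProductSpace ℝ E'] {p : E → ℝ}

namespace IsQuadraticFunction

theorem neg (hp : IsQuadraticFunction p) : IsQuadraticFunction fun x => -p x := by
  obtain ⟨T, b, c, hT, hT0, hp⟩ := hp
  refine ⟨-T, -b, -c, fun x y => by simp [hT x y], neg_ne_zero.2 hT0, fun x => ?_⟩
  simp only [hp, LinearMap.neg_apply, inner_neg_right, inner_neg_left]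
  ring

theorem comp_affineIsometryEquiv (hp : IsQuadraticFunction p) (f : E' ≃ᵃⁱ[ℝ] E) :
    IsQuadraticFunction fun x => p (f x) := by
  obtain ⟨T, b, c, hT, hT0, hp⟩ := hp
  let L : E' ≃ₗᵢ[ℝ] E := f.linearIsometryEquiv
  have hf (x : E') : f x = L x + f 0 := by simpa using f.map_vadd 0 x
  have hL (x : E') (y : E) : ⟪L x, y⟫ = ⟪x, L.symm y⟫ := by
    rw [← L.inner_map_map x, L.apply_symm_apply]
  refine ⟨L.symm.toLinearMap ∘ₗ T ∘ₗ L.toLinearMap, L.symm (T (f 0) + b), p (f 0),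
    fun x y => ?_, fun h => hT0 ?_, fun x => ?_⟩
  · change ⟪L.symm (T (L x)), y⟫ = ⟪x, L.symm (T (L y))⟫
    rw [← hL, ← hT, real_inner_comm, ← hL, real_inner_comm]
  · ext x
    simpa using congrArg L (LinearMap.congr_fun h (L.symm x))
  · change p (f x) = ⟪x, L.symm (T (L x))⟫ + 2 * ⟪L.symm (T (f 0) + b), x⟫ + p (f 0)
    have hcross : ⟪f 0, T (L x)⟫ = ⟪L x, T (f 0)⟫ := by rw [← hT, real_inner_comm]
    rw [← hL, real_inner_comm x, ← hL, hf x, hp, hp (f 0)]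
    simp only [map_add, inner_add_left, inner_add_right, hcross, real_inner_comm b]
    ring

theorem continuous [FiniteDimensional ℝ E] (hp : IsQuadraticFunction p) : Continuous p := by
  obtain ⟨T, b, c, -, -, hp⟩ := hp
  have hT : Continuous T := T.continuous_of_finiteDimensional
  rw [funext hp]
  fun_prop

end IsQuadraticFunction

theorem isQuadraticFunction_diagForm {ι : Type*} [Fintype ι] {P : Finset ι} {a : ι → ℝ} {i : ι}
    (hi : i ∈ P) (ha : a i ≠ 0) (b : EuclideanSpace ℝ ι) (c : ℝ) :
    IsQuadraticFunction fun x => diagForm P a x + 2 * ⟪b, x⟫ + c := by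
  classical
  let T : EuclideanSpace ℝ ι →ₗ[ℝ] EuclideanSpace ℝ ι :=
    Matrix.toEuclideanLin (Matrix.diagonal fun j => if j ∈ P then a j else 0)
  have hT (x y : EuclideanSpace ℝ ι) : ⟪x, T y⟫ = ∑ j ∈ P, a j * (x j * y j) := by
    simp [T, PiLp.inner_apply, Matrix.mulVec_diagonal, mul_comm, mul_left_comm]
  refine ⟨T, b, c, fun x y => ?_, fun h => ha ?_, fun x => ?_⟩
  · simp only [real_inner_comm y, hT, mul_comm (x _)]
  · simpa [h, hi] using (hT (EuclideanSpace.single i 1) (EuclideanSpace.single i 1)).symm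
  · simp only [hT, diagForm, sq]

theorem isQuadricSurface_iff {n : ℕ} {Q : Set (En n)} :
    IsQuadricSurface Q ↔ ∃ p, IsQuadraticFunction p ∧ Q = {x | p x = 0} := by
  have hexpand (a : Matrix (Fin n) (Fin n) ℝ) (b : Fin n → ℝ) (x : En n) :
      ⟪x, Matrix.toEuclideanLin a x⟫ + 2 * ⟪WithLp.toLp 2 b, x⟫ =
        (∑ i, ∑ k, a i k * x i * x k) + 2 * ∑ i, b i * x i := by
    simp [PiLp.inner_apply, Matrix.mulVec, dotProduct, Finset.mul_sum, mul_comm, mul_left_comm,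
      mul_assoc]
  have hsymm (a : Matrix (Fin n) (Fin n) ℝ) : (Matrix.toEuclideanLin a).IsSymmetric ↔
      a.IsSymm := by
    simp [Matrix.isSymmetric_toEuclideanLin_iff, Matrix.IsHermitian, Matrix.IsSymm]
  constructor
  · rintro ⟨a, b, c, ha, ha0, rfl⟩
    refine ⟨_, ⟨Matrix.toEuclideanLin a, WithLp.toLp 2 b, c, (hsymm a).2 ha, by simpa using ha0,
      fun x => rfl⟩, ?_⟩
    simp only [hexpand]
  · rintro ⟨p, ⟨T, b, c, hT, hT0, hp⟩, rfl⟩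
    obtain ⟨a, rfl⟩ := Matrix.toEuclideanLin.surjective T
    refine ⟨a, b, c, (hsymm a).1 hT, by simpa using hT0, ?_⟩
    simp only [hp, ← hexpand]

end QuadraticFunction

section NormalForm

theorem exists_orthonormal_diagonalization {E : Type*} [NormedAddCommGroup E]
    [InnerProductSpace ℝ E] [FiniteDimensional ℝ E] {n : ℕ} (hn : Module.finrank ℝ E = n)
    {T : E →ₗ[ℝ] E} (hT : T.IsSymmetric) :
    ∃ (e : En n ≃ₗᵢ[ℝ] E) (l : Fin n → ℝ), ∀ x, ⟪e x, T (e x)⟫ = diagForm Finset.univ l x := by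
  let e := hT.eigenvectorBasis hn
  refine ⟨e.repr.symm, hT.eigenvalues hn, fun x => ?_⟩
  rw [← e.repr.inner_map_map, e.repr.apply_symm_apply, PiLp.inner_apply]
  refine Finset.sum_congr rfl fun i _ => ?_
  rw [hT.eigenvectorBasis_apply_self_apply hn, e.repr.apply_symm_apply]
  simp only [RCLike.ofReal_real_eq_id, id, RCLike.inner_apply, conj_trivial]
  ring

variable {ι : Type*} [Fintype ι]

theorem exists_translation_completing_square (l : ι → ℝ) (b : EuclideanSpace ℝ ι) (c : ℝ) :
    ∃ (w b' : EuclideanSpace ℝ ι) (c' : ℝ), (∀ i, l i = 0 ∨ b' i = 0) ∧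
      ∀ x, diagForm Finset.univ l (w + x) + 2 * ⟪b, w + x⟫ + c =
        diagForm Finset.univ l x + 2 * ⟪b', x⟫ + c' := by
  classical
  let w : EuclideanSpace ℝ ι := WithLp.toLp 2 fun i => -(b i / l i)
  let b' : EuclideanSpace ℝ ι := WithLp.toLp 2 fun i => if l i = 0 then b i else 0
  refine ⟨w, b', diagForm Finset.univ l w + 2 * ⟪b, w⟫ + c, fun i => ?_, fun x => ?_⟩
  · by_cases hi : l i = 0 <;> simp [b', hi]
  suffices hsum : diagForm Finset.univ l (w + x) + 2 * ⟪b, x⟫ =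
      diagForm Finset.univ l x + diagForm Finset.univ l w + 2 * ⟪b', x⟫ by
    rw [inner_add_right]
    linarith
  simp only [diagForm, PiLp.inner_apply, Finset.mul_sum, ← Finset.sum_add_distrib]
  refine Finset.sum_congr rfl fun i _ => ?_
  by_cases hi : l i = 0
  · simp [b', hi]
  · simp only [PiLp.add_apply, RCLike.inner_apply, conj_trivial, hi, if_false, b', w]
    field_simp
    ring

-- `R` is the reflection exchanging `b` and `-‖b‖` times the basis vector at `k`; it fixes every
-- basis vector orthogonal to both.
theorem exists_linearIsometryEquiv_inner_eq (b : EuclideanSpace ℝ ι) (k : ι) :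
    ∃ R : EuclideanSpace ℝ ι ≃ₗᵢ[ℝ] EuclideanSpace ℝ ι, (∀ x, ⟪b, R x⟫ = -‖b‖ * x k) ∧
      ∀ i ≠ k, b i = 0 → ∀ x, R x i = x i := by
  classical
  let w : EuclideanSpace ℝ ι := EuclideanSpace.single k (-‖b‖)
  let R := Submodule.reflection (ℝ ∙ (b - w))ᗮ
  have hRb : R b = w := Submodule.reflection_sub (by simp [w])
  have hR (x y : EuclideanSpace ℝ ι) : ⟪x, R y⟫ = ⟪R x, y⟫ := by
    rw [← R.inner_map_map (R x) y, Submodule.reflection_reflection]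
  refine ⟨R, fun x => ?_, fun i hik hbi x => ?_⟩
  · rw [hR, hRb]
    simp [w, EuclideanSpace.inner_single_left]
  · have hfix : R (EuclideanSpace.single i 1) = EuclideanSpace.single i 1 := by
      refine Submodule.reflection_mem_subspace_eq_self ?_
      rw [Submodule.mem_orthogonal_singleton_iff_inner_right]
      simp [EuclideanSpace.inner_single_right, w, hik, hbi]
    simpa [hfix, EuclideanSpace.inner_single_left] using hR (EuclideanSpace.single i 1) x

theorem exists_affineIsometryEquiv_diagForm_sub_coord {l : ι → ℝ}
    {b : EuclideanSpace ℝ ι} (hlb : ∀ i, l i = 0 ∨ b i = 0) {k : ι} (hk : b k ≠ 0) (c : ℝ) :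
    ∃ f : EuclideanSpace ℝ ι ≃ᵃⁱ[ℝ] EuclideanSpace ℝ ι, ∀ x,
      diagForm Finset.univ l (f x) + 2 * ⟪b, f x⟫ + c =
        diagForm Finset.univ l x - 2 * ‖b‖ * x k := by
  classical
  obtain ⟨R, hRb, hR⟩ := exists_linearIsometryEquiv_inner_eq b k
  have hb : ‖b‖ ≠ 0 := norm_ne_zero_iff.2 fun h => hk (by simp [h])
  let d : EuclideanSpace ℝ ι := EuclideanSpace.single k (c / (2 * ‖b‖))
  refine ⟨(AffineIsometryEquiv.constVAdd ℝ _ d).trans R.toAffineIsometryEquiv, fun x => ?_⟩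
  have hquad : diagForm Finset.univ l (R (d + x)) = diagForm Finset.univ l x := by
    refine diagForm_congr fun i _ => ?_
    rcases hlb i with hi | hi
    · simp [hi]
    · have hik : i ≠ k := fun h => hk (h ▸ hi)
      rw [hR i hik hi]
      simp [d, hik]
  change diagForm Finset.univ l (R (d + x)) + 2 * ⟪b, R (d + x)⟫ + c = _
  rw [hquad, hRb, PiLp.add_apply]
  simp only [d, PiLp.single_apply, if_true]
  field_simp
  ring

theorem IsQuadraticFunction.exists_normal_form {n : ℕ} {p : En n → ℝ}
    (hp : IsQuadraticFunction p) :
    ∃ (f : En n ≃ᵃⁱ[ℝ] En n) (l : Fin n → ℝ),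
      (∃ c : ℝ, ∀ x, p (f x) = diagForm Finset.univ l x + c) ∨
      ∃ (k : Fin n) (m : ℝ), 0 < m ∧ l k = 0 ∧
        ∀ x, p (f x) = diagForm Finset.univ l x - m * x k := by
  obtain ⟨T, b, c, hT, -, hp⟩ := hp
  obtain ⟨e, l, he⟩ := exists_orthonormal_diagonalization finrank_euclideanSpace_fin hT
  obtain ⟨w, b', c', hlb, hw⟩ := exists_translation_completing_square l (e.symm b) c
  let f : En n ≃ᵃⁱ[ℝ] En n := (AffineIsometryEquiv.constVAdd ℝ _ w).trans e.toAffineIsometryEquiv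
  have hf (x : En n) : p (f x) = diagForm Finset.univ l x + 2 * ⟪b', x⟫ + c' := by
    change p (e (w + x)) = _
    rw [hp, he, ← hw, ← e.inner_map_map (e.symm b), e.apply_symm_apply]
  by_cases hb : b' = 0
  · exact ⟨f, l, Or.inl ⟨c', fun x => by simp [hf, hb]⟩⟩
  · obtain ⟨k, hk⟩ : ∃ k, b' k ≠ 0 := by
      contrapose! hb
      ext i
      exact hb i
    obtain ⟨h, hh⟩ := exists_affineIsometryEquiv_diagForm_sub_coord hlb hk c'
    exact ⟨h.trans f, l, Or.inr ⟨k, 2 * ‖b'‖, by positivity, (hlb k).resolve_right hk,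
      fun x => (hf (h x)).trans (hh x)⟩⟩

end NormalForm

section CanonicalForm

/-- The part of the quadric `a k * x k ^ 2 - ∑ i ∈ P, a i * x i ^ 2 = c` in the half-space
`0 ≤ x k`: for positive coefficients and `k ∉ P`, one sheet of a two-sheeted hyperboloid if
`0 < c`, and one nappe of a cone if `c = 0`. -/
def upperSheet {ι : Type*} (P : Finset ι) (a : ι → ℝ) (k : ι) (c : ℝ) :
    Set (EuclideanSpace ℝ ι) :=
  {x | a k * x k ^ 2 - diagForm P a x = c ∧ 0 ≤ x k}

/-- The list of canonical convex quadrics: elliptic cylinders, hyperboloid sheets, hyperplanes,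
cone nappes and elliptic paraboloids, in this order. The coordinate `ξ₁` has index `0`. -/
def IsCanonicalForm {n : ℕ} [NeZero n] (F : Set (En n)) : Prop :=
  (∃ k : ℕ, 1 ≤ k ∧ k ≤ n ∧ ∃ a : Fin n → ℝ, (∀ i : Fin n, (i : ℕ) < k → 0 < a i) ∧
    F = {x | diagForm {i : Fin n | (i : ℕ) < k} a x = 1}) ∨
  (∃ k : ℕ, 2 ≤ k ∧ k ≤ n ∧ ∃ a : Fin n → ℝ, (∀ i : Fin n, (i : ℕ) < k → 0 < a i) ∧
    F = upperSheet {i : Fin n | 1 ≤ (i : ℕ) ∧ (i : ℕ) < k} a 0 1) ∨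
  F = {x | x 0 = 0} ∨
  (∃ k : ℕ, 2 ≤ k ∧ k ≤ n ∧ ∃ a : Fin n → ℝ, (∀ i : Fin n, (i : ℕ) < k → 0 < a i) ∧
    F = upperSheet {i : Fin n | 1 ≤ (i : ℕ) ∧ (i : ℕ) < k} a 0 0) ∨
  ∃ κ : Fin n, 1 ≤ (κ : ℕ) ∧ ∃ a : Fin n → ℝ, (∀ i : Fin n, (i : ℕ) < (κ : ℕ) → 0 < a i) ∧
    F = {x | diagForm {i : Fin n | (i : ℕ) < (κ : ℕ)} a x = x κ}

/-- `S` takes one of the canonical forms in suitable Cartesian coordinates. -/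
def HasCanonicalForm {n : ℕ} [NeZero n] (S : Set (En n)) : Prop :=
  ∃ f : En n ≃ᵃⁱ[ℝ] En n, IsCanonicalForm (f '' S)

section Permutation

variable {α : Type*} [Finite α] {A P : Finset α}

theorem exists_perm_mem_iff (h : A.card = P.card) :
    ∃ σ : Equiv.Perm α, ∀ i, i ∈ A ↔ σ i ∈ P := by
  classical
  let e : A ≃ P := Finset.equivOfCardEq h
  refine ⟨e.extendSubtype, fun i => ⟨e.extendSubtype_mem i, fun hi => ?_⟩⟩
  by_contra hiA
  exact e.extendSubtype_not_mem i hiA hi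

theorem exists_perm_apply_eq_and_mem_iff (h : A.card = P.card) {j k : α} (hj : j ∉ A)
    (hk : k ∉ P) : ∃ σ : Equiv.Perm α, σ j = k ∧ ∀ i, i ∈ A ↔ σ i ∈ P := by
  classical
  obtain ⟨σ, hσ⟩ := exists_perm_mem_iff h
  have hσj : σ j ∉ P := fun hmem => hj ((hσ j).2 hmem)
  refine ⟨σ.trans (Equiv.swap (σ j) k), by simp, fun i => ?_⟩
  rw [hσ, Equiv.trans_apply, Equiv.swap_apply_def]
  split_ifs with h₁ h₂
  · simp [h₁, hσj, hk]
  · simp [h₂, hσj, hk]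
  · rfl

end Permutation

theorem exists_affineIsometryEquiv_apply_eq {ι : Type*} [Fintype ι] (σ : Equiv.Perm ι) :
    ∃ g : EuclideanSpace ℝ ι ≃ᵃⁱ[ℝ] EuclideanSpace ℝ ι, ∀ x i, g x i = x (σ i) := by
  refine ⟨(LinearIsometryEquiv.piLpCongrLeft 2 ℝ ℝ σ.symm).toAffineIsometryEquiv, fun x i => ?_⟩
  simp [LinearIsometryEquiv.piLpCongrLeft_apply, Equiv.piCongrLeft']

theorem diagForm_comp_perm {ι : Type*} {A P : Finset ι} {σ : Equiv.Perm ι}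
    (hσ : ∀ i, i ∈ A ↔ σ i ∈ P) {x y : EuclideanSpace ℝ ι} (hxy : ∀ i, y i = x (σ i))
    (a : ι → ℝ) : diagForm A (a ∘ σ) y = diagForm P a x :=
  Finset.sum_equiv σ hσ fun i _ => by rw [hxy, Function.comp_apply]

theorem card_filter_val_lt_card {n : ℕ} (P : Finset (Fin n)) :
    Finset.card {i : Fin n | (i : ℕ) < P.card} = P.card := by
  rw [Fin.card_filter_val_lt]
  exact min_eq_right (card_finset_fin_le P)

theorem card_add_one_le_of_notMem {n : ℕ} {P : Finset (Fin n)} {k : Fin n} (hk : k ∉ P) :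
    P.card + 1 ≤ n :=
  Finset.card_insert_of_notMem hk ▸ card_finset_fin_le _

theorem upperSheet_div {ι : Type*} (P : Finset ι) (a : ι → ℝ) (k : ι) {c : ℝ} (hc : c ≠ 0) :
    upperSheet P (fun i => a i / c) k 1 = upperSheet P a k c := by
  ext x
  simp only [upperSheet, mem_ofPred_eq, diagForm_div, div_mul_eq_mul_div, ← sub_div,
    div_eq_one_iff_eq hc]

theorem upperSheet_empty {ι : Type*} {a : ι → ℝ} {k : ι} {c : ℝ} (hak : 0 < a k) (hc : 0 ≤ c) :
    upperSheet ∅ a k c = {x | x k = √(c / a k)} := by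
  ext x
  simp only [upperSheet, diagForm, Finset.sum_empty, sub_zero, mem_ofPred_eq]
  constructor
  · rintro ⟨rfl, hx⟩
    rw [mul_div_cancel_left₀ _ hak.ne', Real.sqrt_sq hx]
  · intro hx
    rw [hx, Real.sq_sqrt (by positivity), mul_div_cancel₀ _ hak.ne']
    exact ⟨rfl, Real.sqrt_nonneg _⟩

variable {n : ℕ} [NeZero n] {S F : Set (En n)} {P : Finset (Fin n)} {a : Fin n → ℝ} {k : Fin n}
  {c : ℝ}

theorem card_filter_one_le_val_lt {m : ℕ} (hm : m + 1 ≤ n) :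
    Finset.card {i : Fin n | 1 ≤ (i : ℕ) ∧ (i : ℕ) < m + 1} = m := by
  have hinsert : Finset.univ.filter (fun i : Fin n => (i : ℕ) < m + 1) =
      insert 0 (Finset.univ.filter fun i : Fin n => 1 ≤ (i : ℕ) ∧ (i : ℕ) < m + 1) := by
    ext i
    simp only [Finset.mem_filter, Finset.mem_univ, Finset.mem_insert, true_and, Fin.ext_iff,
      Fin.val_zero]
    omega
  have hcard := Fin.card_filter_val_lt (n := n) (m := m + 1)
  rw [hinsert, Finset.card_insert_of_notMem (by simp), min_eq_right hm] at hcard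
  exact Nat.succ_injective hcard

theorem HasCanonicalForm.of_preimage (g : En n ≃ᵃⁱ[ℝ] En n) (h : HasCanonicalForm (g ⁻¹' S)) :
    HasCanonicalForm S := by
  obtain ⟨f, hf⟩ := h
  have hg : g.symm '' S = g ⁻¹' S := g.symm.toEquiv.image_eq_preimage_symm S
  refine ⟨g.symm.trans f, ?_⟩
  rwa [AffineIsometryEquiv.coe_trans, image_comp, hg]

theorem hasCanonicalForm_of_mem_iff (g : En n ≃ᵃⁱ[ℝ] En n) (hF : IsCanonicalForm F)
    (h : ∀ x, g x ∈ F ↔ x ∈ S) : HasCanonicalForm S := by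
  have hS : g ⁻¹' F = S := Set.ext h
  exact ⟨g, by rwa [← hS, image_preimage_eq _ g.surjective]⟩

theorem hasCanonicalForm_setOf_diagForm_eq_one (hP : P.Nonempty) (ha : ∀ i ∈ P, 0 < a i) :
    HasCanonicalForm {x | diagForm P a x = 1} := by
  obtain ⟨σ, hσ⟩ := exists_perm_mem_iff (card_filter_val_lt_card P)
  obtain ⟨g, hg⟩ := exists_affineIsometryEquiv_apply_eq σ
  refine hasCanonicalForm_of_mem_iff g (Or.inl ⟨P.card, hP.card_pos, card_finset_fin_le P, a ∘ σ,
    fun i hi => ha _ ((hσ i).1 (by simpa using hi)), rfl⟩) fun x => ?_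
  simp only [mem_ofPred_eq, diagForm_comp_perm hσ (hg x)]

theorem hasCanonicalForm_setOf_coord_eq (k : Fin n) (r : ℝ) : HasCanonicalForm {x | x k = r} := by
  obtain ⟨g, hg⟩ := exists_affineIsometryEquiv_apply_eq (Equiv.swap 0 k)
  refine hasCanonicalForm_of_mem_iff
    ((AffineIsometryEquiv.constVAdd ℝ _ (EuclideanSpace.single k (-r))).trans g)
    (Or.inr (Or.inr (Or.inl rfl))) fun x => ?_
  change g (EuclideanSpace.single k (-r) + x) 0 = 0 ↔ x k = r
  rw [hg, Equiv.swap_apply_left, PiLp.add_apply, PiLp.single_apply, if_pos rfl,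
    neg_add_eq_zero, eq_comm]

theorem hasCanonicalForm_setOf_diagForm_eq_coord (ha : ∀ i ∈ P, 0 < a i) (hk : k ∉ P) :
    HasCanonicalForm {x | diagForm P a x = x k} := by
  rcases P.eq_empty_or_nonempty with rfl | hP
  · simpa [diagForm, eq_comm] using hasCanonicalForm_setOf_coord_eq k 0
  let κ : Fin n := ⟨P.card, card_add_one_le_of_notMem hk⟩
  obtain ⟨σ, hσκ, hσ⟩ := exists_perm_apply_eq_and_mem_iff (card_filter_val_lt_card P)
    (j := κ) (by simp [κ]) hk
  obtain ⟨g, hg⟩ := exists_affineIsometryEquiv_apply_eq σ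
  refine hasCanonicalForm_of_mem_iff g (Or.inr (Or.inr (Or.inr (Or.inr ⟨κ, hP.card_pos, a ∘ σ,
    fun i hi => ha _ ((hσ i).1 (Finset.mem_filter_univ i |>.2 hi)), rfl⟩)))) fun x => ?_
  simp only [mem_ofPred_eq, hg x κ, hσκ, κ, diagForm_comp_perm hσ (hg x)]

theorem exists_affineIsometryEquiv_mem_upperSheet_iff (ha : ∀ i ∈ P, 0 < a i) (hk : k ∉ P)
    (hak : 0 < a k) :
    ∃ (g : En n ≃ᵃⁱ[ℝ] En n) (b : Fin n → ℝ), (∀ i : Fin n, (i : ℕ) < P.card + 1 → 0 < b i) ∧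
      ∀ x c, g x ∈ upperSheet {i : Fin n | 1 ≤ (i : ℕ) ∧ (i : ℕ) < P.card + 1} b 0 c ↔
        x ∈ upperSheet P a k c := by
  obtain ⟨σ, hσk, hσ⟩ := exists_perm_apply_eq_and_mem_iff
    (card_filter_one_le_val_lt (card_add_one_le_of_notMem hk)) (j := 0) (by simp) hk
  obtain ⟨g, hg⟩ := exists_affineIsometryEquiv_apply_eq σ
  refine ⟨g, a ∘ σ, fun i hi => ?_, fun x c => ?_⟩
  · rcases eq_or_ne i 0 with rfl | hi0
    · simpa [hσk] using hak
    · have hi1 : 1 ≤ (i : ℕ) := Nat.one_le_iff_ne_zero.2 fun h => hi0 (Fin.ext h)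
      exact ha _ ((hσ i).1 (Finset.mem_filter_univ i |>.2 ⟨hi1, hi⟩))
  · simp only [upperSheet, mem_ofPred_eq, hg x 0, hσk, diagForm_comp_perm hσ (hg x),
      Function.comp_apply]

theorem hasCanonicalForm_upperSheet (ha : ∀ i ∈ P, 0 < a i) (hk : k ∉ P) (hak : 0 < a k)
    (hc : 0 ≤ c) : HasCanonicalForm (upperSheet P a k c) := by
  rcases P.eq_empty_or_nonempty with rfl | hP
  · rw [upperSheet_empty hak hc]
    exact hasCanonicalForm_setOf_coord_eq k _
  have hle : P.card + 1 ≤ n := card_add_one_le_of_notMem hk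
  have hcard : 2 ≤ P.card + 1 := Nat.succ_le_succ hP.card_pos
  rcases hc.eq_or_lt with rfl | hc
  · obtain ⟨g, b, hb, hg⟩ := exists_affineIsometryEquiv_mem_upperSheet_iff ha hk hak
    exact hasCanonicalForm_of_mem_iff g
      (Or.inr (Or.inr (Or.inr (Or.inl ⟨P.card + 1, hcard, hle, b, hb, rfl⟩)))) fun x => hg x 0
  · rw [← upperSheet_div P a k hc.ne']
    obtain ⟨g, b, hb, hg⟩ := exists_affineIsometryEquiv_mem_upperSheet_iff
      (fun i hi => div_pos (ha i hi) hc) hk (div_pos hak hc)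
    exact hasCanonicalForm_of_mem_iff g
      (Or.inr (Or.inl ⟨P.card + 1, hcard, hle, b, hb, rfl⟩)) fun x => hg x 1

end CanonicalForm

section ConvexQuadric

variable {n : ℕ} {S : Set (En n)} {P : Finset (Fin n)} {a : Fin n → ℝ} {k : Fin n} {c : ℝ}

theorem IsConvexQuadric.preimage (hS : IsConvexQuadric S) (f : En n ≃ᵃⁱ[ℝ] En n) :
    IsConvexQuadric (f ⁻¹' S) := by
  obtain ⟨Q, U, ⟨hQ, x, hx⟩, hU, hUc, rfl⟩ := hS
  obtain ⟨p, hp, rfl⟩ := isQuadricSurface_iff.1 hQ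
  refine ⟨f ⁻¹' {x | p x = 0}, f ⁻¹' U, ⟨?_, f.symm x, by simpa using hx⟩,
    preimage_mem_componentsIn f.toHomeomorph hU, hUc.affine_preimage f.toAffineEquiv.toAffineMap,
    f.toHomeomorph.preimage_frontier U⟩
  exact isQuadricSurface_iff.2 ⟨_, hp.comp_affineIsometryEquiv f, rfl⟩

theorem IsConvexQuadric.exists_component_neg (hS : IsConvexQuadric S) :
    ∃ (p : En n → ℝ) (U : Set (En n)), IsQuadraticFunction p ∧ (∃ x, p x = 0) ∧
      U ∈ componentsIn {x | p x < 0} ∧ Convex ℝ U ∧ S = frontier U := by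
  obtain ⟨Q, U, ⟨hQ, x, hx⟩, hU, hUc, rfl⟩ := hS
  obtain ⟨p, hp, rfl⟩ := isQuadricSurface_iff.1 hQ
  rcases mem_componentsIn_neg_or_pos hp.continuous hU with hU | hU
  · exact ⟨p, U, hp, ⟨x, hx⟩, hU, hUc, rfl⟩
  · exact ⟨_, U, hp.neg, ⟨x, neg_eq_zero.2 hx⟩, by simpa only [neg_neg_iff_pos] using hU, hUc, rfl⟩

theorem isConvexQuadric_setOf_eq_zero {p g : En n → ℝ} (hp : IsQuadraticFunction p)
    (hg : ConvexOn ℝ univ g) (hgc : Continuous g) (hneg : ∃ x, g x < 0) (hzero : ∃ x, g x = 0)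
    (hgp : ∀ x, g x < 0 → p x ≠ 0) (hgp₀ : ∀ x, g x = 0 → p x = 0) :
    IsConvexQuadric {x | g x = 0} := by
  have hfr : frontier {x | g x < 0} = {x | g x = 0} := frontier_setOf_neg_eq hg hgc hneg
  have hconv : Convex ℝ {x | g x < 0} := convex_setOf_neg hg
  refine ⟨{x | p x = 0}, {x | g x < 0}, ⟨isQuadricSurface_iff.2 ⟨p, hp, rfl⟩, hzero.imp hgp₀⟩,
    mem_componentsIn_of_isOpen (isOpen_lt hgc continuous_const) ⟨hneg, hconv.isPreconnected⟩ hgp ?_,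
    hconv, hfr.symm⟩
  rw [hfr, compl_compl]
  exact hgp₀

theorem isConvexQuadric_setOf_diagForm_eq_one (hP : P.Nonempty) (ha : ∀ i ∈ P, 0 < a i) :
    IsConvexQuadric {x | diagForm P a x = 1} := by
  obtain ⟨i, hi⟩ := hP
  have hquad := isQuadraticFunction_diagForm hi (ha i hi).ne' 0 (-1)
  simp only [inner_zero_left, mul_zero, add_zero, ← sub_eq_add_neg] at hquad
  simp only [← sub_eq_zero (a := diagForm P a _)]
  refine isConvexQuadric_setOf_eq_zero hquad
    ((convexOn_diagForm fun i hi => (ha i hi).le).sub (concaveOn_const 1 convex_univ))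
    ((continuous_diagForm P a).sub continuous_const) ⟨0, by simp [diagForm]⟩
    ⟨EuclideanSpace.single i (√(a i))⁻¹, ?_⟩ (fun _ => ne_of_lt) fun _ => id
  rw [diagForm_single_of_mem hi, inv_pow, Real.sq_sqrt (ha i hi).le,
    mul_inv_cancel₀ (ha i hi).ne', sub_self]

theorem isConvexQuadric_setOf_diagForm_eq_coord (hP : P.Nonempty) (ha : ∀ i ∈ P, 0 < a i)
    (hk : k ∉ P) : IsConvexQuadric {x | diagForm P a x = x k} := by
  obtain ⟨i, hi⟩ := hP
  have hquad := isQuadraticFunction_diagForm hi (ha i hi).ne' (EuclideanSpace.single k (-1 / 2)) 0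
  have hp (x : En n) : diagForm P a x + 2 * ⟪EuclideanSpace.single k (-1 / 2), x⟫ + 0 =
      diagForm P a x - 1 * x k := by
    rw [EuclideanSpace.inner_single_left, conj_trivial]
    ring
  simp only [hp] at hquad
  have hS : {x | diagForm P a x = x k} = {x | diagForm P a x - 1 * x k = 0} := by
    simp only [one_mul, sub_eq_zero]
  rw [hS]
  refine isConvexQuadric_setOf_eq_zero hquad
    (convexOn_diagForm_sub_mul_coord (fun i hi => (ha i hi).le) 1 k) hquad.continuous
    ⟨EuclideanSpace.single k 1, ?_⟩ ⟨0, by simp [diagForm]⟩ (fun _ => ne_of_lt) fun _ => id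
  rw [diagForm_single_of_notMem hk]
  simp

theorem setOf_sqrt_sub_eq_upperSheet (ha : ∀ i ∈ P, 0 ≤ a i) (hak : 0 < a k) (hc : 0 ≤ c) :
    {x | √(diagForm P a x + c) - √(a k) * x k = 0} = upperSheet P a k c := by
  ext x
  rw [mem_ofPred_eq, sqrt_sub_sqrt_mul_eq_zero_iff (add_nonneg (diagForm_nonneg ha x) hc) hak,
    upperSheet, mem_ofPred_eq, sub_eq_iff_eq_add', eq_comm]

theorem continuous_sqrt_diagForm_sub_mul_coord (P : Finset (Fin n)) (a : Fin n → ℝ) (b c : ℝ)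
    (k : Fin n) : Continuous fun x => √(diagForm P a x + c) - b * x k := by
  have := continuous_diagForm P a
  fun_prop

theorem isConvexQuadric_upperSheet (ha : ∀ i ∈ P, 0 < a i) (hk : k ∉ P) (hak : 0 < a k)
    (hc : 0 ≤ c) : IsConvexQuadric (upperSheet P a k c) := by
  have ha' (i) (hi : i ∈ P) : 0 ≤ a i := (ha i hi).le
  have hquad := isQuadraticFunction_diagForm (Finset.mem_insert_self k P)
    (a := Function.update a k (-a k)) (by simpa using hak.ne') 0 c
  simp only [inner_zero_left, mul_zero, add_zero, diagForm_insert_update hk] at hquad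
  rw [← setOf_sqrt_sub_eq_upperSheet ha' hak hc]
  have hsingle (t : ℝ) : diagForm P a (EuclideanSpace.single k t) + c = c := by
    rw [diagForm_single_of_notMem hk, zero_add]
  refine isConvexQuadric_setOf_eq_zero hquad
    (convexOn_sqrt_diagForm_sub_mul_coord ha' hc _ k)
    (continuous_sqrt_diagForm_sub_mul_coord P a _ c k)
    ⟨EuclideanSpace.single k ((√c + 1) / √(a k)), ?_⟩ ⟨EuclideanSpace.single k (√c / √(a k)), ?_⟩
    (fun x hx => ?_) fun x hx => ?_
  · rw [hsingle, PiLp.single_apply, if_pos rfl, mul_div_cancel₀ _ (Real.sqrt_pos.2 hak).ne']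
    linarith
  · rw [hsingle, PiLp.single_apply, if_pos rfl, mul_div_cancel₀ _ (Real.sqrt_pos.2 hak).ne',
      sub_self]
  · linarith [((sqrt_sub_sqrt_mul_neg_iff hak).1 hx).1]
  · linarith [((sqrt_sub_sqrt_mul_eq_zero_iff (add_nonneg (diagForm_nonneg ha' x) hc) hak).1 hx).1]

theorem IsCanonicalForm.isConvexQuadric [NeZero n] (hS : IsCanonicalForm S) :
    IsConvexQuadric S := by
  have hsheet {k : ℕ} (hk : 2 ≤ k) {a : Fin n → ℝ} (ha : ∀ i : Fin n, (i : ℕ) < k → 0 < a i)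
      {c : ℝ} (hc : 0 ≤ c) :
      IsConvexQuadric (upperSheet {i : Fin n | 1 ≤ (i : ℕ) ∧ (i : ℕ) < k} a 0 c) :=
    isConvexQuadric_upperSheet (fun i hi => ha i (Finset.mem_filter_univ i |>.1 hi).2) (by simp)
      (ha 0 (by rw [Fin.val_zero]; omega)) hc
  rcases hS with ⟨k, hk, -, a, ha, rfl⟩ | ⟨k, hk, -, a, ha, rfl⟩ | rfl | ⟨k, hk, -, a, ha, rfl⟩ |
    ⟨κ, hκ, a, ha, rfl⟩
  · exact isConvexQuadric_setOf_diagForm_eq_one ⟨0, by simpa using Nat.lt_of_succ_le hk⟩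
      fun i hi => ha i (Finset.mem_filter_univ i |>.1 hi)
  · exact hsheet hk ha zero_le_one
  · have h := isConvexQuadric_upperSheet (n := n) (P := ∅) (a := 1) (k := 0) (c := 0) (by simp)
      (by simp) (by simp) le_rfl
    rw [upperSheet_empty (by simp) le_rfl] at h
    simpa using h
  · exact hsheet hk ha le_rfl
  · exact isConvexQuadric_setOf_diagForm_eq_coord ⟨0, by simpa using Nat.lt_of_succ_le hκ⟩
      (fun i hi => ha i (Finset.mem_filter_univ i |>.1 hi)) (by simp)

end ConvexQuadric

section Classification

theorem nonneg_of_forall_mul_sq_add_nonneg {a c : ℝ} (h : ∀ t : ℝ, 0 ≤ a * t ^ 2 + c) :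
    0 ≤ a := by
  by_contra! ha
  have hc : 0 ≤ c := by simpa using h 0
  have hval := h √((c + 1) / -a)
  rw [Real.sq_sqrt (div_nonneg (by linarith) (by linarith)), div_neg, mul_neg,
    mul_div_cancel₀ _ ha.ne] at hval
  linarith

variable {n : ℕ} {U : Set (En n)} {l : Fin n → ℝ} {j k : Fin n} {c m : ℝ}

theorem nonneg_erase_of_convex_component {ψ : En n → ℝ} (hψ : Continuous ψ)
    (hψj : ∀ x t, ψ (EuclideanSpace.single j t + x) = ψ x) (hj : l j < 0)
    (hU : U ∈ componentsIn {x | diagForm Finset.univ l x + ψ x < 0}) (hUc : Convex ℝ U)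
    (hzero : ∃ x, diagForm Finset.univ l x + ψ x = 0) (z : En n) :
    0 ≤ diagForm (Finset.univ.erase j) l z + ψ z := by
  let φ : En n →L[ℝ] ℝ := EuclideanSpace.proj j
  have hsplit (x : En n) : diagForm Finset.univ l x + ψ x =
      diagForm (Finset.univ.erase j) l x + ψ x - -l j * φ x ^ 2 := by
    rw [diagForm_univ_eq_erase_add l j]
    change _ = _ - -l j * x j ^ 2
    ring
  simp only [hsplit, sub_neg, sub_eq_zero] at hU hzero
  refine nonneg_of_convex_component (v := EuclideanSpace.single j 1)
    ((continuous_diagForm _ l).add hψ) (fun x t => ?_) (by simp [φ]) (neg_pos.2 hj) hU hUc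
    (hzero.imp fun x hx => hx.ge) z
  have hsingle : t • EuclideanSpace.single j (1 : ℝ) = EuclideanSpace.single j t := by
    ext i
    simp
  simp only [Pi.add_apply, hsingle, hψj, diagForm_add_single (Finset.notMem_erase j _)]

theorem nonneg_of_convex_component_sub_coord (hk : l k = 0) (hm : 0 < m)
    (hU : U ∈ componentsIn {x | diagForm Finset.univ l x - m * x k < 0}) (hUc : Convex ℝ U)
    (hzero : ∃ x, diagForm Finset.univ l x - m * x k = 0) (i : Fin n) : 0 ≤ l i := by
  by_contra! hi
  have hki : k ≠ i := fun h => hi.ne (h ▸ hk)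
  simp only [sub_eq_add_neg] at hU hzero
  have hnonneg := nonneg_erase_of_convex_component (ψ := fun x => -(m * x k)) (by fun_prop)
    (fun x t => by simp [hki]) hi hU hUc hzero (EuclideanSpace.single k 1)
  rw [diagForm_single_of_mem (by simp [hki]), hk] at hnonneg
  have hmk : 0 ≤ -m := by simpa using hnonneg
  linarith

variable [NeZero n]

theorem hasCanonicalForm_frontier_of_nonneg (hl : ∀ i, 0 ≤ l i)
    (hU : U ∈ componentsIn {x | diagForm Finset.univ l x + c < 0})
    (hzero : ∃ x, diagForm Finset.univ l x + c = 0) : HasCanonicalForm (frontier U) := by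
  have hl' (i) (_ : i ∈ Finset.univ) : 0 ≤ l i := hl i
  have hc : c < 0 := by
    obtain ⟨x, hx⟩ := nonempty_of_mem_componentsIn hU
    have hxneg : diagForm Finset.univ l x + c < 0 := subset_of_mem_componentsIn hU hx
    linarith [diagForm_nonneg hl' x]
  let P : Finset (Fin n) := {i | 0 < l i}
  have hP : P.Nonempty := by
    obtain ⟨x, hx⟩ := hzero
    rw [← diagForm_filter_pos hl'] at hx
    refine Finset.nonempty_of_sum_ne_zero (f := fun i => l i * x i ^ 2) (ne_of_gt ?_)
    change 0 < diagForm P l x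
    linarith
  have hfr : frontier U = {x | diagForm P (fun i => l i / -c) x = 1} := by
    rw [frontier_component_eq ((convexOn_diagForm hl').add (convexOn_const c convex_univ))
      ((continuous_diagForm _ l).add continuous_const) hU
      (fun x hx => subset_of_mem_componentsIn hU hx) fun x hx => hx]
    ext x
    simp only [P, mem_ofPred_eq, diagForm_div, diagForm_filter_pos hl', Pi.add_apply,
      div_eq_one_iff_eq (neg_ne_zero.2 hc.ne), add_eq_zero_iff_eq_neg]
  rw [hfr]
  exact hasCanonicalForm_setOf_diagForm_eq_one hP fun i hi =>
    div_pos (Finset.mem_filter_univ i |>.1 hi) (neg_pos.2 hc)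

theorem hasCanonicalForm_frontier_of_nonneg_sub_coord (hl : ∀ i, 0 ≤ l i) (hk : l k = 0)
    (hm : 0 < m) (hU : U ∈ componentsIn {x | diagForm Finset.univ l x - m * x k < 0}) :
    HasCanonicalForm (frontier U) := by
  have hl' (i) (_ : i ∈ Finset.univ) : 0 ≤ l i := hl i
  let P : Finset (Fin n) := {i | 0 < l i}
  have hcont : Continuous fun x => diagForm Finset.univ l x - m * x k :=
    (continuous_diagForm _ l).sub (by fun_prop)
  have hfr : frontier U = {x | diagForm P (fun i => l i / m) x = x k} := by
    rw [frontier_component_eq (convexOn_diagForm_sub_mul_coord hl' m k) hcont hU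
      (fun x hx => subset_of_mem_componentsIn hU hx) fun x hx => hx]
    ext x
    simp only [P, mem_ofPred_eq, diagForm_div, diagForm_filter_pos hl', sub_eq_zero,
      div_eq_iff hm.ne', mul_comm]
  rw [hfr]
  exact hasCanonicalForm_setOf_diagForm_eq_coord
    (fun i hi => div_pos (Finset.mem_filter_univ i |>.1 hi) hm) (by simp [P, hk])

theorem hasCanonicalForm_frontier_of_coord_pos {P : Finset (Fin n)} {a : Fin n → ℝ}
    (ha : ∀ i ∈ P, 0 ≤ a i) (hk : k ∉ P) (hak : 0 < a k) (hc : 0 ≤ c)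
    (hU : U ∈ componentsIn {x | diagForm P a x + c < a k * x k ^ 2}) (hUk : ∀ x ∈ U, 0 < x k) :
    HasCanonicalForm (frontier U) := by
  have hfr : frontier U = upperSheet {i ∈ P | 0 < a i} a k c := by
    rw [frontier_component_eq (convexOn_sqrt_diagForm_sub_mul_coord ha hc (√(a k)) k)
      (continuous_sqrt_diagForm_sub_mul_coord P a _ c k) hU
      (fun x hx => (sqrt_sub_sqrt_mul_neg_iff hak).2
        ⟨subset_of_mem_componentsIn hU hx, hUk x hx⟩)
      fun x hx => ((sqrt_sub_sqrt_mul_neg_iff hak).1 hx).1,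
      setOf_sqrt_sub_eq_upperSheet ha hak hc]
    simp only [upperSheet, diagForm_filter_pos ha]
  rw [hfr]
  exact hasCanonicalForm_upperSheet (fun i hi => (Finset.mem_filter.1 hi).2)
    (fun hmem => hk (Finset.mem_filter.1 hmem).1) hak hc

theorem hasCanonicalForm_frontier_of_lt_mul_coord_sq {P : Finset (Fin n)} {a : Fin n → ℝ}
    (ha : ∀ i ∈ P, 0 ≤ a i) (hk : k ∉ P) (hak : 0 < a k) (hc : 0 ≤ c)
    (hU : U ∈ componentsIn {x | diagForm P a x + c < a k * x k ^ 2}) :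
    HasCanonicalForm (frontier U) := by
  have hne (x) (hx : x ∈ U) : x k ≠ 0 := by
    intro hxk
    have hlt : diagForm P a x + c < a k * x k ^ 2 := subset_of_mem_componentsIn hU hx
    rw [hxk] at hlt
    linarith [diagForm_nonneg ha x]
  rcases neg_or_pos_of_isPreconnected (p := fun x => x k) (by fun_prop)
    (isPreconnected_of_mem_componentsIn hU) hne with hneg | hpos
  · let N : En n ≃ᵃⁱ[ℝ] En n := (LinearIsometryEquiv.neg ℝ).toAffineIsometryEquiv
    have hN (x : En n) : N x = -x := rfl
    have hNU : N ⁻¹' U ∈ componentsIn {x | diagForm P a x + c < a k * x k ^ 2} := by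
      simpa [hN, diagForm] using preimage_mem_componentsIn N.toHomeomorph hU
    refine HasCanonicalForm.of_preimage N ?_
    have hfr : N ⁻¹' frontier U = frontier (N ⁻¹' U) := N.toHomeomorph.preimage_frontier U
    rw [hfr]
    refine hasCanonicalForm_frontier_of_coord_pos ha hk hak hc hNU fun x hx => ?_
    simpa [hN] using hneg _ hx
  · exact hasCanonicalForm_frontier_of_coord_pos ha hk hak hc hU hpos

theorem hasCanonicalForm_frontier_of_neg (hk : l k < 0)
    (hU : U ∈ componentsIn {x | diagForm Finset.univ l x + c < 0}) (hUc : Convex ℝ U)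
    (hzero : ∃ x, diagForm Finset.univ l x + c = 0) : HasCanonicalForm (frontier U) := by
  have hnonneg (z : En n) : 0 ≤ diagForm (Finset.univ.erase k) l z + c :=
    nonneg_erase_of_convex_component continuous_const (fun _ _ => rfl) hk hU hUc hzero z
  have hc : 0 ≤ c := by simpa [diagForm] using hnonneg 0
  have hl (i) (hi : i ∈ Finset.univ.erase k) : 0 ≤ l i :=
    nonneg_of_forall_mul_sq_add_nonneg fun t =>
      diagForm_single_of_mem hi l t ▸ hnonneg (EuclideanSpace.single i t)
  have hset (x : En n) : diagForm Finset.univ l x + c < 0 ↔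
      diagForm (Finset.univ.erase k) (|l ·|) x + c < |l k| * x k ^ 2 := by
    have habs : diagForm (Finset.univ.erase k) (|l ·|) x = diagForm (Finset.univ.erase k) l x :=
      diagForm_congr fun i hi => by rw [abs_of_nonneg (hl i hi)]
    rw [diagForm_univ_eq_erase_add l k, habs, abs_of_neg hk]
    constructor <;> intro h <;> linarith
  simp only [hset] at hU
  exact hasCanonicalForm_frontier_of_lt_mul_coord_sq (a := (|l ·|)) (fun i _ => abs_nonneg _)
    (Finset.notMem_erase k _) (abs_pos.2 hk.ne) hc hU

theorem IsConvexQuadric.hasCanonicalForm {S : Set (En n)} (hS : IsConvexQuadric S) :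
    HasCanonicalForm S := by
  obtain ⟨p, U, hp, ⟨x₀, hx₀⟩, hU, hUc, rfl⟩ := hS.exists_component_neg
  obtain ⟨f, l, hf⟩ := hp.exists_normal_form
  refine HasCanonicalForm.of_preimage f ?_
  have hfr : f ⁻¹' frontier U = frontier (f ⁻¹' U) := f.toHomeomorph.preimage_frontier U
  have hfU : f ⁻¹' U ∈ componentsIn {x | p (f x) < 0} := preimage_mem_componentsIn f.toHomeomorph hU
  have hfUc : Convex ℝ (f ⁻¹' U) := hUc.affine_preimage f.toAffineEquiv.toAffineMap
  have hzero : ∃ x, p (f x) = 0 := ⟨f.symm x₀, by simpa using hx₀⟩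
  rw [hfr]
  rcases hf with ⟨c, hf⟩ | ⟨k, m, hm, hk, hf⟩ <;> simp only [hf] at hfU hzero
  · by_cases hl : ∀ i, 0 ≤ l i
    · exact hasCanonicalForm_frontier_of_nonneg hl hfU hzero
    · push Not at hl
      obtain ⟨k, hk⟩ := hl
      exact hasCanonicalForm_frontier_of_neg hk hfU hfUc hzero
  · exact hasCanonicalForm_frontier_of_nonneg_sub_coord
      (nonneg_of_convex_component_sub_coord hk hm hfU hfUc hzero) hk hm hfU

theorem HasCanonicalForm.isConvexQuadric {S : Set (En n)} (hS : HasCanonicalForm S) :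
    IsConvexQuadric S := by
  obtain ⟨f, hf⟩ := hS
  simpa [preimage_image_eq _ f.injective] using hf.isConvexQuadric.preimage f

theorem convex_surface_is_convex_quadric_iff_general (S : Set (En n)) :
    IsConvexQuadric S ↔ HasCanonicalForm S :=
  ⟨IsConvexQuadric.hasCanonicalForm, HasCanonicalForm.isConvexQuadric⟩

end Classification

/-- a convex surface S ⊆ ℝⁿ (n ≥ 2) is a convex quadric if and only if, in
suitable Cartesian coordinates (i.e. after an affine isometry of ℝⁿ), S takes one of the
five canonical forms. -/
theorem convex_surface_is_convex_quadric_iff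
    {n : ℕ} (hn : 2 ≤ n) (S : Set (En n)) (hS : IsConvexSurface S) :
    IsConvexQuadric S ↔
      ∃ f : En n ≃ᵃⁱ[ℝ] En n,
        -- (1) a₁ξ₁² + ⋯ + a_kξ_k² = 1,  1 ≤ k ≤ n
        (∃ k : ℕ, 1 ≤ k ∧ k ≤ n ∧ ∃ a : Fin n → ℝ, (∀ i : Fin n, (i : ℕ) < k → 0 < a i) ∧
          f '' S = {x : En n |
            ∑ i ∈ Finset.univ.filter (fun i : Fin n => (i : ℕ) < k), a i * x i ^ 2 = 1}) ∨
        -- (2) a₁ξ₁² − a₂ξ₂² − ⋯ − a_kξ_k² = 1, ξ₁ ≥ 0,  2 ≤ k ≤ n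
        (∃ k : ℕ, 2 ≤ k ∧ k ≤ n ∧ ∃ a : Fin n → ℝ, (∀ i : Fin n, (i : ℕ) < k → 0 < a i) ∧
          f '' S = {x : En n |
            a ⟨0, by omega⟩ * x ⟨0, by omega⟩ ^ 2 -
              ∑ i ∈ Finset.univ.filter (fun i : Fin n => 1 ≤ (i : ℕ) ∧ (i : ℕ) < k),
                a i * x i ^ 2 = 1 ∧ 0 ≤ x ⟨0, by omega⟩}) ∨
        -- (3) ξ₁ = 0
        (f '' S = {x : En n | x ⟨0, by omega⟩ = 0}) ∨
        -- (4) a₁ξ₁² − a₂ξ₂² − ⋯ − a_kξ_k² = 0, ξ₁ ≥ 0,  2 ≤ k ≤ n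
        (∃ k : ℕ, 2 ≤ k ∧ k ≤ n ∧ ∃ a : Fin n → ℝ, (∀ i : Fin n, (i : ℕ) < k → 0 < a i) ∧
          f '' S = {x : En n |
            a ⟨0, by omega⟩ * x ⟨0, by omega⟩ ^ 2 -
              ∑ i ∈ Finset.univ.filter (fun i : Fin n => 1 ≤ (i : ℕ) ∧ (i : ℕ) < k),
                a i * x i ^ 2 = 0 ∧ 0 ≤ x ⟨0, by omega⟩}) ∨
        -- (5) a₁ξ₁² + ⋯ + a_{k−1}ξ_{k−1}² = ξ_k,  2 ≤ k ≤ n  (κ : Fin n is the index of ξ_k)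
        (∃ κ : Fin n, 1 ≤ (κ : ℕ) ∧ ∃ a : Fin n → ℝ, (∀ i : Fin n, (i : ℕ) < (κ : ℕ) → 0 < a i) ∧
          f '' S = {x : En n |
            ∑ i ∈ Finset.univ.filter (fun i : Fin n => (i : ℕ) < (κ : ℕ)), a i * x i ^ 2 = x κ}) := by
  have : NeZero n := ⟨by omega⟩
  exact convex_surface_is_convex_quadric_iff_general S
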